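/- Suppose the points x_1,…,x_N ∈ S^d satisfy the Marcinkiewicz–Zygmund property of degree 2n. For P ∈ P_n let L′(P) ∈ P_n be the unique element satisfying ⟨L′(P), Q⟩_w = (1/N)·Σ_{i=1}^N (∇Q(x_i), ∇P(x_i)) for all Q ∈ P_n. Then ‖L′(P)‖_w ≥ (1/2)·‖P‖_w for every P ∈ P_n. -/

import Mathlib

open MeasureTheory Finset
open scoped RealInnerProductSpace

noncomputable section
attribute [local instance] Classical.propDecidable

/-- Euclidean space `ℝ^{d+1}`. -/
abbrev Euc (d : ℕ) := EuclideanSpace ℝ (Fin (d + 1))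

/-- The unit sphere `S^d ⊆ ℝ^{d+1}`. -/
abbrev Sph (d : ℕ) := Metric.sphere (0 : Euc d) 1

/-- Real-valued functions on the sphere. -/
abbrev SphFun (d : ℕ) := Sph d → ℝ

/-- The normalized surface measure `μ_d` on `S^d`. -/
noncomputable def muSph (d : ℕ) : Measure (Sph d) :=
  ((volume : Measure (Euc d)).toSphere Set.univ)⁻¹ • (volume : Measure (Euc d)).toSphere

/-- Gegenbauer polynomials `C_k^α`, normalized so that `C_k^α(1) = binom(2α+k-1, k)`,
defined by the standard three-term recurrence. -/
noncomputable def gegenbauer (α : ℝ) : ℕ → Polynomial ℝ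
  | 0 => 1
  | 1 => Polynomial.C (2 * α) * Polynomial.X
  | n + 2 =>
      Polynomial.C (2 * ((n : ℝ) + 1 + α) / ((n : ℝ) + 2)) *
          (Polynomial.X * gegenbauer α (n + 1)) -
        Polynomial.C (((n : ℝ) + 2 * α) / ((n : ℝ) + 2)) * gegenbauer α n

/-- `dim H_k = ((2k+d-1)/(k+d-1))·binom(d+k-1, k)`. -/
noncomputable def dimHarm (d k : ℕ) : ℝ :=
  ((2 * (k : ℝ) + d - 1) / ((k : ℝ) + d - 1)) * (Nat.choose (d + k - 1) k : ℝ)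

/-- The kernel polynomial `g_w(t) = Σ_{k=1}^n dim H_k / (w_k G_k^α(1)) · G_k^α(t)`,
with `α = (d-1)/2` and `w_k = k(k+d-1)`. -/
noncomputable def gw (d n : ℕ) : Polynomial ℝ :=
  ∑ k ∈ Finset.Icc 1 n,
    Polynomial.C (dimHarm d k /
        (((k : ℝ) * ((k : ℝ) + d - 1)) * (gegenbauer (((d : ℝ) - 1) / 2) k).eval 1)) *
      gegenbauer (((d : ℝ) - 1) / 2) k

/-- The Laplace operator on polynomials in `d+1` variables. -/
noncomputable def polyLaplacian (d : ℕ) (p : MvPolynomial (Fin (d + 1)) ℝ) :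
    MvPolynomial (Fin (d + 1)) ℝ :=
  ∑ i : Fin (d + 1), MvPolynomial.pderiv i (MvPolynomial.pderiv i p)

/-- The space `H_k` of spherical harmonics of degree `k` on `S^d`: restrictions to the
sphere of harmonic homogeneous polynomials of degree `k`. -/
def sphHarmonic (d k : ℕ) : Set (SphFun d) :=
  {f | ∃ p : MvPolynomial (Fin (d + 1)) ℝ, p.IsHomogeneous k ∧ polyLaplacian d p = 0 ∧
        ∀ x : Sph d, f x = MvPolynomial.eval (fun i => (x : Euc d) i) p}

/-- The space `P_n`: restrictions to `S^d` of polynomials of total degree at most `n`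
having zero mean over the sphere. -/
def PolySph (d n : ℕ) : Set (SphFun d) :=
  {f | ∃ p : MvPolynomial (Fin (d + 1)) ℝ, p.totalDegree ≤ n ∧
        (∀ x : Sph d, f x = MvPolynomial.eval (fun i => (x : Euc d) i) p) ∧
        ∫ x, f x ∂muSph d = 0}

/-- The `H_k`-component of `P ∈ P_n` in the decomposition `P_n = ⊕_{k=1}^n H_k`
(the decomposition is unique; an arbitrary one is chosen if it exists). -/
noncomputable def harmComponent (d n : ℕ) (P : SphFun d) (k : ℕ) : SphFun d :=
  if h : ∃ c : ℕ → SphFun d, (∀ j, c j ∈ sphHarmonic d j) ∧ P = ∑ j ∈ Finset.Icc 1 n, c j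
  then h.choose k else 0

/-- The inner product `⟨P,Q⟩_w = Σ_{k=1}^n w_k ∫ P_k Q_k dμ_d` with `w_k = k(k+d-1)`. -/
noncomputable def innerW (d n : ℕ) (P Q : SphFun d) : ℝ :=
  ∑ k ∈ Finset.Icc 1 n, ((k : ℝ) * ((k : ℝ) + d - 1)) *
    ∫ x, harmComponent d n P k x * harmComponent d n Q k x ∂muSph d

/-- The norm `‖P‖_w = ⟨P,P⟩_w^{1/2}`. -/
noncomputable def normW (d n : ℕ) (P : SphFun d) : ℝ :=
  Real.sqrt (innerW d n P P)

/-- The function `G_x(y) = g_w((x,y))` on the sphere, for `x ∈ ℝ^{d+1}`. -/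
noncomputable def GxFun (d n : ℕ) (x : Euc d) : SphFun d :=
  fun y => (gw d n).eval ⟪x, (y : Euc d)⟫

/-- The extension of a function on the sphere to `ℝ^{d+1} \ {0}` by `x ↦ f(x/‖x‖)`
(with value `0` at the origin). -/
noncomputable def extendSph (d : ℕ) (f : SphFun d) : Euc d → ℝ :=
  fun x =>
    if hx : x = 0 then 0
    else f ⟨‖x‖⁻¹ • x, by
      rw [mem_sphere_zero_iff_norm, norm_smul, norm_inv, norm_norm,
        inv_mul_cancel₀ (norm_ne_zero_iff.mpr hx)]⟩

/-- The spherical gradient `∇f(x) = (∂/∂x) f(x/‖x‖)`. -/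
noncomputable def sphGrad (d : ℕ) (f : SphFun d) (x : Euc d) : Euc d :=
  gradient (extendSph d f) x

/-- The spherical Hessian quadratic form `∇²f(x)·y·y`. -/
noncomputable def sphHessApply (d : ℕ) (f : SphFun d) (x y : Euc d) : ℝ :=
  iteratedFDeriv ℝ 2 (extendSph d f) x ![y, y]

/-- `‖∇²f(x₀)‖ = max { |∇²f(x₀)·y·y| : ‖y‖ = 1, (y,x₀) = 0 }`. -/
noncomputable def sphHessNorm (d : ℕ) (f : SphFun d) (x₀ : Sph d) : ℝ :=
  sSup {r : ℝ | ∃ y : Euc d, ‖y‖ = 1 ∧ ⟪y, (x₀ : Euc d)⟫ = 0 ∧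
    r = |sphHessApply d f (x₀ : Euc d) y|}

/-- `x_1, …, x_N ∈ S^d` form a spherical `n`-design. -/
def IsSphericalDesign (d n N : ℕ) (x : Fin N → Sph d) : Prop :=
  ∀ p : MvPolynomial (Fin (d + 1)) ℝ, p.totalDegree ≤ n →
    ∫ y, MvPolynomial.eval (fun j => (y : Euc d) j) p ∂muSph d =
      (N : ℝ)⁻¹ * ∑ i, MvPolynomial.eval (fun j => ((x i : Euc d)) j) p

/-- An area-regular partition `R_1, …, R_N` of `S^d`: closed sets with pairwise disjoint
interiors, covering the sphere, each of normalized measure `1/N`. -/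
def IsAreaRegularPartition (d N : ℕ) (R : Fin N → Set (Sph d)) : Prop :=
  (∀ i, IsClosed (R i)) ∧ (⋃ i, R i) = Set.univ ∧
    (∀ i j, i ≠ j → interior (R i) ∩ interior (R j) = ∅) ∧
    ∀ i, muSph d (R i) = 1 / N

/-- The Marcinkiewicz–Zygmund property of degree `m` for points `x_1, …, x_N ∈ S^d`. -/
def MZProperty (d m N : ℕ) (x : Fin N → Sph d) : Prop :=
  ∀ p : MvPolynomial (Fin (d + 1)) ℝ, p.totalDegree ≤ m →
    (1 / 2) * (∫ y, |MvPolynomial.eval (fun j => (y : Euc d) j) p| ∂muSph d) ≤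
        (N : ℝ)⁻¹ * ∑ i, |MvPolynomial.eval (fun j => ((x i : Euc d)) j) p| ∧
      (N : ℝ)⁻¹ * ∑ i, |MvPolynomial.eval (fun j => ((x i : Euc d)) j) p| ≤
        (3 / 2) * ∫ y, |MvPolynomial.eval (fun j => (y : Euc d) j) p| ∂muSph d

/-- The point `x_i(P)`: move `x` along the great circle in the direction of the spherical
gradient `∇P(x)` through angle `‖∇P(x)‖`. -/
noncomputable def movePoint (d : ℕ) (P : SphFun d) (x : Sph d) : Euc d :=
  if _h : sphGrad d P (x : Euc d) = 0 then (x : Euc d)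
  else Real.cos ‖sphGrad d P (x : Euc d)‖ • (x : Euc d) +
    Real.sin ‖sphGrad d P (x : Euc d)‖ • (‖sphGrad d P (x : Euc d)‖⁻¹ • sphGrad d P (x : Euc d))

/-- The map `L(P) = (1/N) Σ_i G_{x_i(P)}`. -/
noncomputable def Lmap (d n N : ℕ) (x : Fin N → Sph d) (P : SphFun d) : SphFun d :=
  (N : ℝ)⁻¹ • ∑ i, GxFun d n (movePoint d P (x i))

end

/-!
Integrating `∂_i (p(x) exp (-‖x‖²))` over `ℝ^{d+1}` for a homogeneous polynomial `p` of degree `m`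
and separating the radial factors, which are values of `Γ`, gives
`∫ ∂_i p dμ_d = (m + d) ∫ x_i p dμ_d`. Applied to `p ∂_i q` and summed over `i`, this is Green's
identity `∫ (∇p, ∇q) dμ_d = ∫ p (-Δ_S q) dμ_d` on the sphere. As `w_k` is the eigenvalue of `-Δ_S`
on `H_k`, the spaces `H_k` are mutually orthogonal and `‖P‖_w² = ∫ ‖∇P‖² dμ_d`.

On the sphere `‖∇P‖²` is a nonnegative polynomial of degree at most `2n`, so the lower
Marcinkiewicz–Zygmund inequality bounds its mean over the `x_i` from below by `‖P‖_w² / 2`. That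
mean is `⟨L'(P), P⟩_w`, and the Cauchy–Schwarz inequality bounds it from above by
`‖L'(P)‖_w ‖P‖_w`.
-/

section EulerDerivation

open MvPolynomial

variable {σ R : Type*} [CommRing R]

lemma totalDegree_pderiv_le (i : σ) (p : MvPolynomial σ R) :
    (pderiv i p).totalDegree ≤ p.totalDegree := by
  conv_lhs => rw [← sum_homogeneousComponent p, map_sum]
  refine totalDegree_finsetSum_le fun m hm => ?_
  have hhom : (homogeneousComponent m p).IsHomogeneous m := homogeneousComponent_isHomogeneous m p
  exact (hhom.pderiv (i := i)).totalDegree_le.trans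
    ((Nat.sub_le m 1).trans (Nat.lt_succ_iff.mp (mem_range.mp hm)))

variable [Fintype σ]

/-- The Euler operator `∑ i, x i ∂/∂x i`, i.e. `r ∂/∂r` in polar coordinates. -/
noncomputable def eulerDerivation : Derivation R (MvPolynomial σ R) (MvPolynomial σ R) :=
  ∑ i, (X i : MvPolynomial σ R) • pderiv i

lemma eulerDerivation_apply (p : MvPolynomial σ R) :
    eulerDerivation p = ∑ i, X i * pderiv i p := by
  change Derivation.coeFnAddMonoidHom (∑ i, (X i : MvPolynomial σ R) • pderiv i) p = _
  rw [map_sum, Finset.sum_apply]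
  rfl

lemma eulerDerivation_X (i : σ) : eulerDerivation (X i : MvPolynomial σ R) = X i := by
  classical
  simp [eulerDerivation_apply, pderiv_X, Pi.single_apply]

lemma eulerDerivation_of_isHomogeneous {p : MvPolynomial σ R} {m : ℕ} (hp : p.IsHomogeneous m) :
    eulerDerivation p = m • p := by
  rw [eulerDerivation_apply, hp.sum_X_mul_pderiv]

lemma sum_X_mul_eulerDerivation_pderiv (p : MvPolynomial σ R) :
    ∑ i, X i * eulerDerivation (pderiv i p) =
      eulerDerivation (eulerDerivation p) - eulerDerivation p := by
  conv_rhs => arg 1; rw [eulerDerivation_apply p]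
  simp only [map_sum, Derivation.leibniz, smul_eq_mul, eulerDerivation_X, sum_add_distrib]
  simp only [mul_comm (pderiv _ p), ← eulerDerivation_apply, add_sub_cancel_right]

lemma totalDegree_eulerDerivation_le (p : MvPolynomial σ R) :
    (eulerDerivation p).totalDegree ≤ p.totalDegree := by
  conv_lhs => rw [← sum_homogeneousComponent p, map_sum]
  refine totalDegree_finsetSum_le fun m hm => ?_
  have hhom : (homogeneousComponent m p).IsHomogeneous m := homogeneousComponent_isHomogeneous m p
  rw [eulerDerivation_of_isHomogeneous hhom]
  exact (totalDegree_smul_le m _).trans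
    (hhom.totalDegree_le.trans (Nat.lt_succ_iff.mp (mem_range.mp hm)))

/-- The polynomial whose restriction to the unit sphere is the scalar product of the spherical
gradients of `p` and `q`: the radial parts of the two gradients have been taken out. -/
noncomputable def tangentialGradProd (p q : MvPolynomial σ R) : MvPolynomial σ R :=
  ∑ i, pderiv i p * pderiv i q - eulerDerivation p * eulerDerivation q

lemma tangentialGradProd_comm (p q : MvPolynomial σ R) :
    tangentialGradProd p q = tangentialGradProd q p := by
  simp only [tangentialGradProd, mul_comm]

lemma totalDegree_tangentialGradProd_le (p q : MvPolynomial σ R) :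
    (tangentialGradProd p q).totalDegree ≤ p.totalDegree + q.totalDegree := by
  refine (totalDegree_sub _ _).trans (max_le (totalDegree_finsetSum_le fun i _ => ?_) ?_)
  · exact (totalDegree_mul _ _).trans
      (add_le_add (totalDegree_pderiv_le i p) (totalDegree_pderiv_le i q))
  · exact (totalDegree_mul _ _).trans
      (add_le_add (totalDegree_eulerDerivation_le p) (totalDegree_eulerDerivation_le q))

end EulerDerivation

section PolyEval

open MvPolynomial

variable {ι : Type*} (p : MvPolynomial ι ℝ)

/-- The polynomial function of `p` on Euclidean space. -/
noncomputable def polyEval (p : MvPolynomial ι ℝ) (x : EuclideanSpace ℝ ι) : ℝ :=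
  eval (fun i => x i) p

lemma continuous_polyEval : Continuous (polyEval p) :=
  (continuous_eval p).comp (PiLp.continuous_ofLp 2 _)

lemma polyEval_smul_of_isHomogeneous {p : MvPolynomial ι ℝ} {m : ℕ} (hp : p.IsHomogeneous m)
    (r : ℝ) (x : EuclideanSpace ℝ ι) : polyEval p (r • x) = r ^ m * polyEval p x := by
  simp only [polyEval, eval_eq, mul_sum, PiLp.smul_apply, smul_eq_mul, mul_pow, prod_mul_distrib,
    prod_pow_eq_pow_sum]
  refine sum_congr rfl fun s hs => ?_
  rw [← hp.degree_eq_sum_deg_support hs, mul_left_comm]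

variable [Fintype ι] (q : MvPolynomial ι ℝ) (x : EuclideanSpace ℝ ι)

/-- The Euclidean gradient of the polynomial function of `p`, built from formal derivatives. -/
noncomputable def polyGradient (p : MvPolynomial ι ℝ) (x : EuclideanSpace ℝ ι) :
    EuclideanSpace ℝ ι :=
  WithLp.toLp 2 fun i => polyEval (pderiv i p) x

lemma hasGradientAt_polyEval : HasGradientAt (polyEval p) (polyGradient p x) x := by
  classical
  rw [hasGradientAt_iff_hasFDerivAt]
  induction p using MvPolynomial.induction_on with
  | C a =>
    convert! hasFDerivAt_const (𝕜 := ℝ) a x using 1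
    · ext y; simp [polyEval]
    · ext y; simp [polyGradient, polyEval, PiLp.inner_apply]
  | add p q hp hq =>
    convert! hp.add hq using 1
    · ext y; simp [polyEval]
    · ext y; simp [polyGradient, polyEval, PiLp.inner_apply, mul_add, sum_add_distrib]
  | mul_X p j hp =>
    convert! hp.mul (EuclideanSpace.proj j : EuclideanSpace ℝ ι →L[ℝ] ℝ).hasFDerivAt using 1
    · ext y; simp [polyEval]
    · ext y
      simp [polyGradient, polyEval, PiLp.inner_apply, pderiv_X, Pi.single_apply, apply_ite, mul_add,
        sum_add_distrib, mul_sum, mul_comm, mul_left_comm]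

lemma inner_polyGradient : ⟪polyGradient p x, polyGradient q x⟫ =
    polyEval (∑ i, pderiv i p * pderiv i q) x := by
  simp [polyGradient, polyEval, PiLp.inner_apply, mul_comm]

lemma inner_self_polyGradient : ⟪x, polyGradient p x⟫ = polyEval (eulerDerivation p) x := by
  simp [eulerDerivation_apply, polyGradient, polyEval, PiLp.inner_apply, mul_comm]

end PolyEval

section PolarCoordinates

lemma integral_volumeIoiPow (k : ℕ) (φ : ℝ → ℝ) :
    ∫ r : Set.Ioi (0 : ℝ), φ r ∂Measure.volumeIoiPow k = ∫ r in Set.Ioi (0 : ℝ), r ^ k * φ r := by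
  simp only [Measure.volumeIoiPow, ENNReal.ofReal]
  rw [integral_withDensity_eq_integral_smul (measurable_subtype_coe.pow_const _).real_toNNReal,
    integral_subtype_comap measurableSet_Ioi fun r => Real.toNNReal (r ^ k) • φ r]
  refine setIntegral_congr_fun measurableSet_Ioi fun r hr => ?_
  have hpow : 0 ≤ r ^ k := pow_nonneg (Set.mem_Ioi.mp hr).le _
  simp only [NNReal.smul_def, Real.coe_toNNReal _ hpow, smul_eq_mul]

variable {E : Type*} [NormedAddCommGroup E] [NormedSpace ℝ E] [FiniteDimensional ℝ E]
  [Nontrivial E] [MeasurableSpace E] [BorelSpace E] (μ : Measure E) [μ.IsAddHaarMeasure]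

theorem integral_homogeneous_mul_fun_norm {f : E → ℝ} {m : ℕ}
    (hf : ∀ r : ℝ, 0 < r → ∀ x, f (r • x) = r ^ m * f x) (φ : ℝ → ℝ) :
    ∫ x, f x * φ ‖x‖ ∂μ = (∫ s : Metric.sphere (0 : E) 1, f s ∂μ.toSphere) *
      ∫ r in Set.Ioi (0 : ℝ), r ^ (Module.finrank ℝ E - 1 + m) * φ r := by
  have hpolar (x : ({0}ᶜ : Set E)) : f x * φ ‖x.1‖ =
      f (homeomorphUnitSphereProd E x).1 * (‖x.1‖ ^ m * φ ‖x.1‖) := by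
    have hfx : f x = ‖x.1‖ ^ m * f (‖x.1‖⁻¹ • x.1) := by
      rw [← hf _ (norm_pos_iff.mpr x.2), smul_inv_smul₀ (norm_ne_zero_iff.mpr x.2)]
    rw [hfx, homeomorphUnitSphereProd_apply_fst_coe]
    ring
  calc
    ∫ x, f x * φ ‖x‖ ∂μ = ∫ x : ({0}ᶜ : Set E), f x * φ ‖x.1‖ ∂μ.comap (↑) := by
      rw [integral_subtype_comap (measurableSet_singleton _).compl fun x => f x * φ ‖x‖,
        restrict_compl_singleton]
    _ = ∫ z : Metric.sphere (0 : E) 1 × Set.Ioi (0 : ℝ), f z.1 * (z.2.1 ^ m * φ z.2)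
          ∂μ.toSphere.prod (.volumeIoiPow (Module.finrank ℝ E - 1)) := by
      rw [← μ.measurePreserving_homeomorphUnitSphereProd.integral_comp
        (Homeomorph.measurableEmbedding _)]
      simp only [hpolar, homeomorphUnitSphereProd_apply_snd_coe]
    _ = (∫ s : Metric.sphere (0 : E) 1, f s ∂μ.toSphere) *
          ∫ r : Set.Ioi (0 : ℝ), r.1 ^ m * φ r ∂.volumeIoiPow (Module.finrank ℝ E - 1) :=
      integral_prod_mul (fun s : Metric.sphere (0 : E) 1 => f s)
        fun r : Set.Ioi (0 : ℝ) => r.1 ^ m * φ r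
    _ = _ := by
      rw [integral_volumeIoiPow _ fun r => r ^ m * φ r]
      simp only [pow_add, mul_assoc]

end PolarCoordinates

section GaussianIntegrals

open MvPolynomial

lemma integrableOn_pow_mul_exp_neg_sq (k : ℕ) :
    IntegrableOn (fun r : ℝ => r ^ k * Real.exp (-r ^ 2)) (Set.Ioi 0) := by
  have hk : (-1 : ℝ) < k := neg_one_lt_zero.trans_le k.cast_nonneg
  simpa using integrableOn_rpow_mul_exp_neg_mul_sq one_pos hk

lemma integral_pow_mul_exp_neg_sq (k : ℕ) :
    ∫ r in Set.Ioi (0 : ℝ), r ^ k * Real.exp (-r ^ 2) = Real.Gamma ((k + 1) / 2) / 2 := by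
  have hk : (-1 : ℝ) < k := neg_one_lt_zero.trans_le k.cast_nonneg
  simpa [div_eq_inv_mul] using integral_rpow_mul_exp_neg_rpow two_pos hk

lemma integrable_norm_pow_mul_exp_neg_norm_sq {E : Type*} [NormedAddCommGroup E] [NormedSpace ℝ E]
    [FiniteDimensional ℝ E] [Nontrivial E] [MeasurableSpace E] [BorelSpace E] (μ : Measure E)
    [μ.IsAddHaarMeasure] (m : ℕ) :
    Integrable (fun x : E => ‖x‖ ^ m * Real.exp (-‖x‖ ^ 2)) μ := by
  rw [integrable_fun_norm_addHaar μ (f := fun r => r ^ m * Real.exp (-r ^ 2))]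
  simpa only [smul_eq_mul, pow_add, mul_assoc] using
    integrableOn_pow_mul_exp_neg_sq (Module.finrank ℝ E - 1 + m)

lemma hasGradientAt_exp_neg_norm_sq {E : Type*} [NormedAddCommGroup E] [InnerProductSpace ℝ E]
    [CompleteSpace E] (x : E) :
    HasGradientAt (fun y : E => Real.exp (-‖y‖ ^ 2)) ((-2 * Real.exp (-‖x‖ ^ 2)) • x) x := by
  rw [hasGradientAt_iff_hasFDerivAt]
  convert! (hasStrictFDerivAt_norm_sq x).hasFDerivAt.neg.exp using 1
  ext y
  simp [mul_assoc, mul_left_comm]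

variable {ι : Type*} [Fintype ι]

lemma abs_polyEval_monomial_le (s : ι →₀ ℕ) (a : ℝ) (x : EuclideanSpace ℝ ι) :
    |polyEval (monomial s a) x| ≤ |a| * ‖x‖ ^ s.degree := by
  rw [polyEval, eval_monomial, abs_mul, Finsupp.prod, abs_prod, Finsupp.degree_apply,
    ← prod_pow_eq_pow_sum]
  gcongr with i
  rw [abs_pow]
  gcongr
  exact PiLp.norm_apply_le x i

lemma integrable_polyEval_mul_exp_neg_norm_sq [Nonempty ι] (p : MvPolynomial ι ℝ) :
    Integrable fun x : EuclideanSpace ℝ ι => polyEval p x * Real.exp (-‖x‖ ^ 2) := by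
  induction p using MvPolynomial.induction_on' with
  | monomial s a =>
    refine ((integrable_norm_pow_mul_exp_neg_norm_sq volume s.degree).const_mul |a|).mono'
      ((continuous_polyEval _).mul (by fun_prop)).aestronglyMeasurable (.of_forall fun x => ?_)
    rw [norm_mul, Real.norm_eq_abs, Real.norm_of_nonneg (Real.exp_pos _).le, ← mul_assoc]
    gcongr
    exact abs_polyEval_monomial_le s a x
  | add p q hp hq =>
    refine (hp.add hq).congr (.of_forall fun x => ?_)
    simp only [polyEval, map_add, add_mul, Pi.add_apply]

lemma integral_polyEval_mul_exp_neg_norm_sq [Nonempty ι] {p : MvPolynomial ι ℝ} {m : ℕ}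
    (hp : p.IsHomogeneous m) :
    ∫ x : EuclideanSpace ℝ ι, polyEval p x * Real.exp (-‖x‖ ^ 2) =
      (∫ s : Metric.sphere (0 : EuclideanSpace ℝ ι) 1, polyEval p s ∂volume.toSphere) *
        (Real.Gamma ((m + Fintype.card ι) / 2) / 2) := by
  have hcard : ((Fintype.card ι - 1 + m : ℕ) + 1 : ℝ) = m + Fintype.card ι := by
    have := Fintype.card_pos (α := ι)
    norm_cast
    omega
  rw [integral_homogeneous_mul_fun_norm volume
      (fun r _ => polyEval_smul_of_isHomogeneous hp r) fun r => Real.exp (-r ^ 2),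
    integral_pow_mul_exp_neg_sq, finrank_euclideanSpace, hcard]

theorem integral_polyEval_pderiv_mul_exp_neg_norm_sq (i : ι) (p : MvPolynomial ι ℝ) :
    ∫ x : EuclideanSpace ℝ ι, polyEval (pderiv i p) x * Real.exp (-‖x‖ ^ 2) =
      2 * ∫ x : EuclideanSpace ℝ ι, polyEval (X i * p) x * Real.exp (-‖x‖ ^ 2) := by
  classical
  have : Nonempty ι := ⟨i⟩
  set gauss : EuclideanSpace ℝ ι → ℝ := fun x => Real.exp (-‖x‖ ^ 2) with hgauss
  have hp' (x : EuclideanSpace ℝ ι) :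
      fderiv ℝ (polyEval p) x (EuclideanSpace.single i 1) = polyEval (pderiv i p) x := by
    rw [(hasGradientAt_polyEval p x).fderiv_apply, EuclideanSpace.inner_single_right]
    simp [polyGradient]
  have hgauss' (x : EuclideanSpace ℝ ι) :
      polyEval p x * fderiv ℝ gauss x (EuclideanSpace.single i 1) =
        -2 * (polyEval (X i * p) x * gauss x) := by
    rw [(hasGradientAt_exp_neg_norm_sq x).fderiv_apply, EuclideanSpace.inner_single_right]
    simp [polyEval, hgauss, mul_assoc, mul_comm, mul_left_comm]
  have hparts := integral_mul_fderiv_eq_neg_fderiv_mul_of_integrable (μ := volume)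
    (f := polyEval p) (g := gauss) (v := EuclideanSpace.single i 1)
    (by simpa only [hp'] using integrable_polyEval_mul_exp_neg_norm_sq (pderiv i p))
    (by simpa only [hgauss'] using
      (integrable_polyEval_mul_exp_neg_norm_sq (X i * p)).const_mul (-2))
    (integrable_polyEval_mul_exp_neg_norm_sq p)
    (fun x _ => (hasGradientAt_polyEval p x).differentiableAt)
    (fun x _ => (hasGradientAt_exp_neg_norm_sq x).differentiableAt)
  simp only [hp', hgauss', integral_const_mul] at hparts
  linarith

end GaussianIntegrals

section SphereIntegrals

open MvPolynomial

theorem integral_toSphere_polyEval_pderiv {ι : Type*} [Fintype ι] (i : ι)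
    {p : MvPolynomial ι ℝ} {m : ℕ} (hp : p.IsHomogeneous m) :
    ∫ s : Metric.sphere (0 : EuclideanSpace ℝ ι) 1, polyEval (pderiv i p) s ∂volume.toSphere =
      (m + Fintype.card ι - 1) *
        ∫ s : Metric.sphere (0 : EuclideanSpace ℝ ι) 1, polyEval (X i * p) s ∂volume.toSphere := by
  have : Nonempty ι := ⟨i⟩
  have hparts := integral_polyEval_pderiv_mul_exp_neg_norm_sq i p
  have hcard : (0 : ℝ) < Fintype.card ι := Nat.cast_pos.mpr Fintype.card_pos
  rw [integral_polyEval_mul_exp_neg_norm_sq ((isHomogeneous_X ℝ i).mul hp)] at hparts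
  obtain _ | m := m
  · have hconst : pderiv i p = 0 := by
      rw [totalDegree_eq_zero_iff_eq_C.mp (Nat.le_zero.mp hp.totalDegree_le), pderiv_C]
    have hΓ : Real.Gamma ((1 + Fintype.card ι) / 2) ≠ 0 :=
      (Real.Gamma_pos_of_pos (by positivity)).ne'
    have hX : ∫ s : Metric.sphere (0 : EuclideanSpace ℝ ι) 1, polyEval (X i * p) s
        ∂volume.toSphere = 0 := by
      simpa [hconst, polyEval, hΓ] using hparts
    rw [hX, hconst, mul_zero]
    simp only [polyEval, map_zero, integral_zero]
  · have hΓ : 0 < Real.Gamma ((m + Fintype.card ι) / 2) :=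
      Real.Gamma_pos_of_pos (by positivity)
    have harg : ((1 + (m + 1) : ℕ) + Fintype.card ι : ℝ) / 2 = (m + Fintype.card ι) / 2 + 1 := by
      push_cast
      ring
    rw [integral_polyEval_mul_exp_neg_norm_sq hp.pderiv, Nat.add_sub_cancel, harg,
      Real.Gamma_add_one (by positivity)] at hparts
    refine mul_right_cancel₀ hΓ.ne' ?_
    push_cast
    linear_combination 2 * hparts

variable (d : ℕ)

instance isProbabilityMeasure_muSph : IsProbabilityMeasure (muSph d) :=
  have : NeZero (volume : Measure (Euc d)).toSphere := ⟨Measure.toSphere_ne_zero _⟩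
  isProbabilityMeasureSMul

lemma integrable_muSph {f : SphFun d} (hf : Continuous f) : Integrable f (muSph d) :=
  hf.integrable_of_hasCompactSupport (HasCompactSupport.of_compactSpace f)

lemma continuous_polyEval_sphere (p : MvPolynomial (Fin (d + 1)) ℝ) :
    Continuous fun s : Sph d => polyEval p s :=
  (continuous_polyEval p).comp continuous_subtype_val

/-- The mean over `S^d` of a polynomial in `d + 1` variables. -/
noncomputable def sphereAverage : MvPolynomial (Fin (d + 1)) ℝ →ₗ[ℝ] ℝ where
  toFun p := ∫ s : Sph d, polyEval p s ∂muSph d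
  map_add' p q := by
    simpa only [polyEval, map_add] using integral_add
      (integrable_muSph d (continuous_polyEval_sphere d p))
      (integrable_muSph d (continuous_polyEval_sphere d q))
  map_smul' a p := by
    simp only [polyEval, smul_eval, integral_const_mul, smul_eq_mul, RingHom.id_apply]

lemma sphereAverage_apply (p : MvPolynomial (Fin (d + 1)) ℝ) :
    sphereAverage d p = ∫ s : Sph d, polyEval p s ∂muSph d := rfl

theorem sphereAverage_pderiv (i : Fin (d + 1)) (p : MvPolynomial (Fin (d + 1)) ℝ) :
    sphereAverage d (pderiv i p) = sphereAverage d (X i * (eulerDerivation p + (d : ℝ) • p)) := by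
  induction p using MvPolynomial.induction_on' with
  | monomial u a =>
    have hhom : (monomial u a : MvPolynomial (Fin (d + 1)) ℝ).IsHomogeneous u.degree :=
      isHomogeneous_monomial a rfl
    have hsphere := integral_toSphere_polyEval_pderiv i hhom
    rw [eulerDerivation_of_isHomogeneous hhom, ← Nat.cast_smul_eq_nsmul ℝ, ← add_smul,
      mul_smul_comm, map_smul, sphereAverage_apply, sphereAverage_apply, muSph,
      integral_smul_measure, integral_smul_measure, hsphere]
    simp only [Fintype.card_fin, smul_eq_mul]
    push_cast
    ring
  | add p q hp hq =>
    rw [map_add, map_add, hp, hq, ← map_add]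
    congr 1
    rw [map_add, smul_add]
    ring

end SphereIntegrals

section Green

open MvPolynomial

variable {d : ℕ}

/-- Minus the Laplace–Beltrami operator of `S^d`, acting on polynomials through the polar form
`Δ = ∂²/∂r² + (d/r) ∂/∂r + r⁻² Δ_S` of the Euclidean Laplacian at `r = 1`. -/
noncomputable def negSphLaplacian (d : ℕ) :
    MvPolynomial (Fin (d + 1)) ℝ →ₗ[ℝ] MvPolynomial (Fin (d + 1)) ℝ :=
  eulerDerivation.toLinearMap ∘ₗ eulerDerivation.toLinearMap +
    ((d : ℝ) - 1) • eulerDerivation.toLinearMap -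
    ∑ i, (pderiv i).toLinearMap ∘ₗ (pderiv i).toLinearMap

lemma negSphLaplacian_apply (p : MvPolynomial (Fin (d + 1)) ℝ) :
    negSphLaplacian d p = eulerDerivation (eulerDerivation p) + ((d : ℝ) - 1) • eulerDerivation p -
      polyLaplacian d p := by
  simp [negSphLaplacian, polyLaplacian]

lemma negSphLaplacian_of_harmonic {p : MvPolynomial (Fin (d + 1)) ℝ} {k : ℕ}
    (hp : p.IsHomogeneous k) (hΔ : polyLaplacian d p = 0) :
    negSphLaplacian d p = ((k : ℝ) * (k + d - 1)) • p := by
  rw [negSphLaplacian_apply, hΔ, eulerDerivation_of_isHomogeneous hp, map_nsmul,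
    eulerDerivation_of_isHomogeneous hp]
  module

theorem sphereAverage_tangentialGradProd (p q : MvPolynomial (Fin (d + 1)) ℝ) :
    sphereAverage d (tangentialGradProd p q) = sphereAverage d (p * negSphLaplacian d q) := by
  have hdiv : ∑ i, pderiv i (p * pderiv i q) =
      ∑ i, pderiv i p * pderiv i q + p * polyLaplacian d q := by
    simp only [Derivation.leibniz, smul_eq_mul, sum_add_distrib, polyLaplacian, mul_sum,
      mul_comm (pderiv _ q), add_comm]
  have hradial : ∑ i, X i * (eulerDerivation (p * pderiv i q) + (d : ℝ) • (p * pderiv i q)) =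
      eulerDerivation p * eulerDerivation q +
        p * (eulerDerivation (eulerDerivation q) - eulerDerivation q) +
        p * ((d : ℝ) • eulerDerivation q) := by
    rw [← sum_X_mul_eulerDerivation_pderiv, eulerDerivation_apply q]
    simp only [mul_sum, smul_sum, ← sum_add_distrib]
    refine sum_congr rfl fun i _ => ?_
    simp only [Derivation.leibniz, smul_eq_mul, smul_eq_C_mul]
    ring
  have hgauss : sphereAverage d (∑ i, pderiv i (p * pderiv i q)) = sphereAverage d
      (∑ i, X i * (eulerDerivation (p * pderiv i q) + (d : ℝ) • (p * pderiv i q))) := by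
    simp only [map_sum, sphereAverage_pderiv]
  rw [hdiv, hradial, ← sub_eq_zero, ← map_sub] at hgauss
  rw [← sub_eq_zero, ← map_sub, ← hgauss, tangentialGradProd, negSphLaplacian_apply]
  congr 1
  rw [sub_smul, one_smul]
  ring

lemma sphHarmonic_weight_injective {j k : ℕ} (hj : 1 ≤ j) (hk : 1 ≤ k)
    (h : (j : ℝ) * (j + d - 1) = k * (k + d - 1)) : j = k := by
  have hj' : (1 : ℝ) ≤ j := Nat.one_le_cast.mpr hj
  have hk' : (1 : ℝ) ≤ k := Nat.one_le_cast.mpr hk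
  have hsum : (0 : ℝ) < j + k + d - 1 := by linarith [d.cast_nonneg (α := ℝ)]
  have hfactor : ((j : ℝ) - k) * (j + k + d - 1) = 0 := by linear_combination h
  exact_mod_cast sub_eq_zero.mp ((mul_eq_zero.mp hfactor).resolve_right hsum.ne')

theorem sphereAverage_mul_of_harmonic_of_ne {p q : MvPolynomial (Fin (d + 1)) ℝ} {j k : ℕ}
    (hp : p.IsHomogeneous j) (hpΔ : polyLaplacian d p = 0) (hq : q.IsHomogeneous k)
    (hqΔ : polyLaplacian d q = 0) (hne : (j : ℝ) * (j + d - 1) ≠ k * (k + d - 1)) :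
    sphereAverage d (p * q) = 0 := by
  have hsymm : sphereAverage d (p * negSphLaplacian d q) =
      sphereAverage d (q * negSphLaplacian d p) := by
    rw [← sphereAverage_tangentialGradProd, tangentialGradProd_comm,
      sphereAverage_tangentialGradProd]
  rw [negSphLaplacian_of_harmonic hp hpΔ, negSphLaplacian_of_harmonic hq hqΔ, mul_smul_comm,
    mul_smul_comm, map_smul, map_smul, mul_comm q p, smul_eq_mul, smul_eq_mul] at hsymm
  exact (mul_eq_mul_right_iff.mp hsymm.symm).resolve_left hne

theorem sphereAverage_tangentialGradProd_sum_harmonic {n : ℕ}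
    {p : ℕ → MvPolynomial (Fin (d + 1)) ℝ} (hp : ∀ k, (p k).IsHomogeneous k)
    (hΔ : ∀ k, polyLaplacian d (p k) = 0) :
    sphereAverage d (tangentialGradProd (∑ k ∈ Icc 1 n, p k) (∑ k ∈ Icc 1 n, p k)) =
      ∑ k ∈ Icc 1 n, ((k : ℝ) * (k + d - 1)) * sphereAverage d (p k * p k) := by
  simp only [sphereAverage_tangentialGradProd, map_sum,
    negSphLaplacian_of_harmonic (hp _) (hΔ _), mul_sum, mul_smul_comm, map_smul, smul_eq_mul]
  refine sum_congr rfl fun k hk => ?_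
  rw [sum_mul, map_sum, sum_eq_single_of_mem k hk]
  intro j hj hjk
  exact sphereAverage_mul_of_harmonic_of_ne (hp j) (hΔ j) (hp k) (hΔ k) fun h =>
    hjk (sphHarmonic_weight_injective (mem_Icc.mp hj).1 (mem_Icc.mp hk).1 h)

end Green

section SphericalGradient

lemma hasFDerivAt_inv_norm_smul {E : Type*} [NormedAddCommGroup E] [InnerProductSpace ℝ E] {s : E}
    (hs : ‖s‖ = 1) :
    HasFDerivAt (fun y : E => ‖y‖⁻¹ • y)
      (ContinuousLinearMap.id ℝ E - (innerSL ℝ s).smulRight s) s := by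
  have hnorm : HasFDerivAt (fun y : E => ‖y‖) (innerSL ℝ s) s := by
    have hsqrt := (hasStrictFDerivAt_norm_sq s).hasFDerivAt.sqrt (by simp [hs])
    simp only [Real.sqrt_sq (norm_nonneg _)] at hsqrt
    convert! hsqrt using 1
    ext y
    simp [hs]
  have hinv : HasFDerivAt (fun y : E => ‖y‖⁻¹) (-innerSL ℝ s) s := by
    have hs' : ‖s‖ ≠ 0 := hs ▸ one_ne_zero
    convert! (hasDerivAt_inv hs').comp_hasFDerivAt s hnorm using 1
    simp [hs]
  convert! hinv.fun_smul (hasFDerivAt_id s) using 1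
  ext y
  simp [hs, sub_eq_add_neg]

lemma hasGradientAt_comp_inv_norm_smul {E : Type*} [NormedAddCommGroup E] [InnerProductSpace ℝ E]
    [CompleteSpace E] {F : E → ℝ} {g s : E} (hs : ‖s‖ = 1) (hF : HasGradientAt F g s) :
    HasGradientAt (fun y => F (‖y‖⁻¹ • y)) (g - ⟪s, g⟫ • s) s := by
  have hs' : ‖s‖⁻¹ • s = s := by rw [hs, inv_one, one_smul]
  rw [hasGradientAt_iff_hasFDerivAt] at hF ⊢
  rw [← hs'] at hF
  convert! hF.comp (f := fun y => ‖y‖⁻¹ • y) s (hasFDerivAt_inv_norm_smul hs) using 1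
  ext v
  simp [real_inner_comm, mul_comm]

variable {d : ℕ}

lemma sphGrad_eq_of_hasGradientAt {f : SphFun d} {F : Euc d → ℝ} (hf : ∀ y : Sph d, f y = F y)
    {s : Sph d} {g : Euc d} (hF : HasGradientAt F g s) :
    sphGrad d f s = g - ⟪(s : Euc d), g⟫ • (s : Euc d) := by
  have hext : extendSph d f =ᶠ[nhds (s : Euc d)] fun y => F (‖y‖⁻¹ • y) := by
    filter_upwards [isOpen_ne.mem_nhds (ne_zero_of_mem_unit_sphere s)] with y hy
    rw [extendSph, dif_neg hy, hf]
  exact ((hasGradientAt_comp_inv_norm_smul (norm_eq_of_mem_sphere s) hF).congr_of_eventuallyEq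
    hext).gradient

theorem inner_sphGrad_sphGrad {f g : SphFun d} {p q : MvPolynomial (Fin (d + 1)) ℝ}
    (hf : ∀ y : Sph d, f y = polyEval p y) (hg : ∀ y : Sph d, g y = polyEval q y) (s : Sph d) :
    ⟪sphGrad d f s, sphGrad d g s⟫ = polyEval (tangentialGradProd p q) s := by
  have hss : ⟪(s : Euc d), (s : Euc d)⟫ = 1 := by
    rw [real_inner_self_eq_norm_sq, norm_eq_of_mem_sphere, one_pow]
  rw [sphGrad_eq_of_hasGradientAt hf (hasGradientAt_polyEval p s),
    sphGrad_eq_of_hasGradientAt hg (hasGradientAt_polyEval q s)]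
  simp only [inner_sub_left, inner_sub_right, inner_smul_left, inner_smul_right, hss,
    real_inner_comm (s : Euc d) (polyGradient p s), inner_polyGradient, inner_self_polyGradient]
  simp only [tangentialGradProd, polyEval, map_sub, map_mul, RCLike.conj_to_real]
  ring

end SphericalGradient

section WeightedNorm

lemma integral_sq_const_mul_add {α : Type*} [MeasurableSpace α] {μ : Measure α} {f g : α → ℝ}
    (hff : Integrable (fun x => f x * f x) μ) (hfg : Integrable (fun x => f x * g x) μ)
    (hgg : Integrable (fun x => g x * g x) μ) (t : ℝ) :
    ∫ x, (t * f x + g x) ^ 2 ∂μ =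
      (∫ x, f x * f x ∂μ) * (t * t) + 2 * (∫ x, f x * g x ∂μ) * t + ∫ x, g x * g x ∂μ := by
  have hexpand (x : α) :
      (t * f x + g x) ^ 2 = f x * f x * (t * t) + f x * g x * (2 * t) + g x * g x := by
    ring
  have hquad : Integrable (fun x => f x * f x * (t * t) + f x * g x * (2 * t)) μ :=
    (hff.mul_const _).add (hfg.mul_const _)
  simp only [hexpand]
  rw [integral_add hquad hgg,
    integral_add (hff.mul_const _) (hfg.mul_const _), integral_mul_const, integral_mul_const]
  ring

variable {d n : ℕ}

lemma sphHarmonic_weight_nonneg {k : ℕ} (hk : k ∈ Icc 1 n) : (0 : ℝ) ≤ k * (k + d - 1) := by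
  have hk' : (1 : ℝ) ≤ k := Nat.one_le_cast.mpr (mem_Icc.mp hk).1
  exact mul_nonneg k.cast_nonneg (by linarith [d.cast_nonneg (α := ℝ)])

lemma harmComponent_mem_sphHarmonic (P : SphFun d) (k : ℕ) :
    harmComponent d n P k ∈ sphHarmonic d k := by
  rw [harmComponent]
  split_ifs with h
  · exact h.choose_spec.1 k
  · exact ⟨0, MvPolynomial.isHomogeneous_zero _ _ _, by simp [polyLaplacian], by simp⟩

lemma continuous_harmComponent (P : SphFun d) (k : ℕ) : Continuous (harmComponent d n P k) := by
  obtain ⟨p, -, -, hp⟩ := harmComponent_mem_sphHarmonic (n := n) P k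
  rw [funext hp]
  exact continuous_polyEval_sphere d p

lemma innerW_quadratic_nonneg (P Q : SphFun d) (t : ℝ) :
    0 ≤ innerW d n P P * (t * t) + 2 * innerW d n P Q * t + innerW d n Q Q := by
  have hint (P Q : SphFun d) (k : ℕ) :
      Integrable (fun x => harmComponent d n P k x * harmComponent d n Q k x) (muSph d) :=
    integrable_muSph d ((continuous_harmComponent P k).mul (continuous_harmComponent Q k))
  have hsum : innerW d n P P * (t * t) + 2 * innerW d n P Q * t + innerW d n Q Q =
      ∑ k ∈ Icc 1 n, ((k : ℝ) * (k + d - 1)) *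
        ∫ x, (t * harmComponent d n P k x + harmComponent d n Q k x) ^ 2 ∂muSph d := by
    simp only [innerW, sum_mul, mul_sum, ← sum_add_distrib,
      integral_sq_const_mul_add (hint P P _) (hint P Q _) (hint Q Q _)]
    exact sum_congr rfl fun k _ => by ring
  rw [hsum]
  exact sum_nonneg fun k hk => mul_nonneg (sphHarmonic_weight_nonneg hk)
    (integral_nonneg fun x => sq_nonneg _)

lemma innerW_self_nonneg (P : SphFun d) : 0 ≤ innerW d n P P := by
  simpa using innerW_quadratic_nonneg (n := n) P P 0

lemma normW_sq (P : SphFun d) : normW d n P ^ 2 = innerW d n P P :=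
  Real.sq_sqrt (innerW_self_nonneg P)

theorem innerW_le_normW_mul_normW (P Q : SphFun d) :
    innerW d n P Q ≤ normW d n P * normW d n Q := by
  have hdiscrim := discrim_le_zero (innerW_quadratic_nonneg (n := n) P Q)
  rw [normW, normW, ← Real.sqrt_mul (innerW_self_nonneg P)]
  refine Real.le_sqrt_of_sq_le ?_
  rw [discrim] at hdiscrim
  linarith

end WeightedNorm

section SampledGradients

variable {d n N : ℕ}

/-- `P` lies in `H_1 + ⋯ + H_n`; otherwise all its `harmComponent`s are the junk value `0`. -/
def IsSumOfHarmonics (d n : ℕ) (P : SphFun d) : Prop :=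
  ∃ c : ℕ → SphFun d, (∀ j, c j ∈ sphHarmonic d j) ∧ P = ∑ j ∈ Icc 1 n, c j

lemma innerW_self_of_not_isSumOfHarmonics {P : SphFun d} (hP : ¬ IsSumOfHarmonics d n P) :
    innerW d n P P = 0 := by
  have hzero (k : ℕ) : harmComponent d n P k = 0 := dif_neg hP
  simp [innerW, hzero]

lemma sum_harmComponent {P : SphFun d} (hP : IsSumOfHarmonics d n P) :
    ∑ k ∈ Icc 1 n, harmComponent d n P k = P := by
  have hcomp (k : ℕ) : harmComponent d n P k = hP.choose k := dif_pos hP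
  simp only [hcomp]
  exact hP.choose_spec.2.symm

theorem exists_innerW_self_eq_sphereAverage {P : SphFun d} (hP : IsSumOfHarmonics d n P) :
    ∃ p : MvPolynomial (Fin (d + 1)) ℝ, p.totalDegree ≤ n ∧ (∀ y : Sph d, P y = polyEval p y) ∧
      innerW d n P P = sphereAverage d (tangentialGradProd p p) := by
  choose p hhom hΔ hp using harmComponent_mem_sphHarmonic (n := n) P
  refine ⟨∑ k ∈ Icc 1 n, p k, ?_, fun y => ?_, ?_⟩
  · exact MvPolynomial.totalDegree_finsetSum_le fun k hk =>
      (hhom k).totalDegree_le.trans (mem_Icc.mp hk).2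
  · rw [← congrFun (sum_harmComponent hP) y, Finset.sum_apply, polyEval, map_sum]
    exact sum_congr rfl fun k _ => hp k y
  · rw [sphereAverage_tangentialGradProd_sum_harmonic hhom hΔ]
    simp only [innerW, hp, sphereAverage_apply, polyEval, map_mul]

/-- The lower Marcinkiewicz–Zygmund inequality of degree `m` with constant `A`. -/
def IsLowerMZ (A : ℝ) (m : ℕ) (x : Fin N → Sph d) : Prop :=
  ∀ p : MvPolynomial (Fin (d + 1)) ℝ, p.totalDegree ≤ m →
    A * ∫ y : Sph d, |polyEval p y| ∂muSph d ≤ (N : ℝ)⁻¹ * ∑ i, |polyEval p (x i)|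

/-- `L` is the element `L'(P)` of `P_n` that represents the discretization
`Q ↦ (1/N) ∑ i, (∇Q(x_i), ∇P(x_i))` of `⟨·, P⟩_w`. -/
def IsSampledGradRepr (n : ℕ) (x : Fin N → Sph d) (P L : SphFun d) : Prop :=
  L ∈ PolySph d n ∧ ∀ Q ∈ PolySph d n,
    innerW d n L Q = (N : ℝ)⁻¹ * ∑ i, ⟪sphGrad d Q (x i), sphGrad d P (x i)⟫

variable {A : ℝ} {x : Fin N → Sph d}

theorem mul_innerW_self_le_sum_inner_sphGrad (hx : IsLowerMZ A (2 * n) x) (P : SphFun d) :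
    A * innerW d n P P ≤ (N : ℝ)⁻¹ * ∑ i, ⟪sphGrad d P (x i), sphGrad d P (x i)⟫ := by
  by_cases hP : IsSumOfHarmonics d n P
  · obtain ⟨p, hdeg, hp, hinner⟩ := exists_innerW_self_eq_sphereAverage hP
    have hgrad (s : Sph d) : ⟪sphGrad d P s, sphGrad d P s⟫ =
        polyEval (tangentialGradProd p p) s := inner_sphGrad_sphGrad hp hp s
    have habs (s : Sph d) : |polyEval (tangentialGradProd p p) s| =
        polyEval (tangentialGradProd p p) s :=
      abs_of_nonneg (hgrad s ▸ real_inner_self_nonneg)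
    have hdeg' : (tangentialGradProd p p).totalDegree ≤ 2 * n :=
      (totalDegree_tangentialGradProd_le p p).trans (by omega)
    simpa only [hinner, hgrad, sphereAverage_apply, habs] using hx _ hdeg'
  · rw [innerW_self_of_not_isSumOfHarmonics hP, mul_zero]
    exact mul_nonneg (inv_nonneg.mpr N.cast_nonneg)
      (sum_nonneg fun i _ => real_inner_self_nonneg)

theorem statement14_general (hx : IsLowerMZ A (2 * n) x) {P L : SphFun d}
    (hP : P ∈ PolySph d n) (hL : IsSampledGradRepr n x P L) :
    A * normW d n P ≤ normW d n L := by
  have hself : A * normW d n P * normW d n P ≤ normW d n L * normW d n P := by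
    calc A * normW d n P * normW d n P = A * innerW d n P P := by rw [← normW_sq]; ring
      _ ≤ (N : ℝ)⁻¹ * ∑ i, ⟪sphGrad d P (x i), sphGrad d P (x i)⟫ :=
        mul_innerW_self_le_sum_inner_sphGrad hx P
      _ = innerW d n L P := (hL.2 P hP).symm
      _ ≤ normW d n L * normW d n P := innerW_le_normW_mul_normW L P
  obtain hzero | hpos := (Real.sqrt_nonneg (innerW d n P P)).eq_or_lt
  · rw [normW, ← hzero, mul_zero]
    exact Real.sqrt_nonneg _
  · exact le_of_mul_le_mul_right hself hpos

end SampledGradients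

/-- If `x_1,…,x_N ∈ S^d` satisfy the Marcinkiewicz–Zygmund property of
degree `2n` and `L'(P) ∈ P_n` satisfies `⟨L'(P), Q⟩_w = (1/N) Σ_i (∇Q(x_i), ∇P(x_i))` for
all `Q ∈ P_n`, then `‖L'(P)‖_w ≥ (1/2)‖P‖_w`. -/
theorem statement14 (d n N : ℕ) (hd : 1 ≤ d) (hn : 1 ≤ n) (hN : 1 ≤ N)
    (x : Fin N → Sph d) (hMZ : MZProperty d (2 * n) N x)
    (P : SphFun d) (hP : P ∈ PolySph d n)
    (L' : SphFun d) (hL' : L' ∈ PolySph d n)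
    (hrepr : ∀ Q ∈ PolySph d n,
      innerW d n L' Q =
        (N : ℝ)⁻¹ * ∑ i, ⟪sphGrad d Q (x i : Euc d), sphGrad d P (x i : Euc d)⟫) :
    (1 / 2) * normW d n P ≤ normW d n L' :=
  statement14_general (fun p hp => (hMZ p hp).1) hP ⟨hL', hrepr⟩
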